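/- Let k be a field of odd prime characteristic p and n ≥ 1. Then there is an isomorphism of kS_n-modules sgn(n) ⊕ ⨁_{μ ∈ P(n;p), ε_μ = −1} M(μ|(n−|μ|))^{⊕ c_μ^(p)} ≅ ⨁_{μ ∈ P(n;p), ε_μ = 1} M(μ|(n−|μ|))^{⊕ c_μ^(p)}, where sgn(n) = M(∅|(n)) is the sign representation of S_n and (n−|μ|) denotes the one-part composition with the single part n−|μ| (the empty composition if |μ| = n). -/

import Mathlib

noncomputable section
open scoped DirectSum

/-- The index of the block (among consecutive blocks of sizes `γ_1, γ_2, …`) containing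
position `x`; blocks are numbered starting from `0`. -/
def blockIdx (γ : List ℕ) (x : ℕ) : ℕ :=
  (List.range γ.length).countP fun j => decide ((γ.take (j + 1)).sum ≤ x)

/-- The Young subgroup of `S_n` attached to the finite sequence `γ`: permutations mapping
each of the consecutive blocks of sizes `γ_1, γ_2, …` to itself. -/
def youngSubgroup (n : ℕ) (γ : List ℕ) : Subgroup (Equiv.Perm (Fin n)) where
  carrier := {σ | ∀ x : Fin n, blockIdx γ (σ x) = blockIdx γ x}
  one_mem' := fun _ => rfl
  mul_mem' := by
    intro a b ha hb x
    simpa [Equiv.Perm.mul_apply] using (ha (b x)).trans (hb x)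
  inv_mem' := by
    intro a ha x
    simpa using (ha (a⁻¹ x)).symm

lemma youngSubgroup_mem {n : ℕ} {γ : List ℕ} (σ : youngSubgroup n γ) :
    ∀ x : Fin n, blockIdx γ ((σ : Equiv.Perm (Fin n)) x) = blockIdx γ x := σ.2

/-- Restriction of an element of a Young subgroup to the `j`-th block. -/
def blockRestrict (n : ℕ) (γ : List ℕ) (j : ℕ) :
    youngSubgroup n γ →* Equiv.Perm {x : Fin n // blockIdx γ (x : ℕ) = j} where
  toFun σ := Equiv.Perm.subtypePerm (σ : Equiv.Perm (Fin n)) (fun x => by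
    rw [youngSubgroup_mem σ x])
  map_one' := by
    ext x
    rfl
  map_mul' := by
    intro a b
    ext x
    rfl

/-- The sign of the restriction of an element of a Young subgroup to the `j`-th block,
viewed in the field `k`. -/
def blockSign (k : Type*) [Field k] (n : ℕ) (γ : List ℕ) (j : ℕ) :
    youngSubgroup n γ →* k :=
  ((Int.castRingHom k).toMonoidHom.comp (Units.coeHom ℤ)).comp
    (Equiv.Perm.sign.comp (blockRestrict n γ j))

/-- The character of the Young subgroup `S_α × S_β` affording `k(α) ⊠ sgn(β)`:
`σ` acts by the product of the signs of the restrictions of `σ` to the `β`-blocks. -/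
def chiHom (k : Type*) [Field k] (n : ℕ) (α β : List ℕ) :
    youngSubgroup n (α ++ β) →* k :=
  ∏ j ∈ Finset.Ico α.length (α.length + β.length), blockSign k n (α ++ β) j

/-- The group algebra `k S_n`. -/
abbrev GA (k : Type*) [Field k] (n : ℕ) : Type _ := MonoidAlgebra k (Equiv.Perm (Fin n))

/-- The left submodule of `k S_n` generated by the elements `σ - χ(σ)·1`, `σ ∈ S_α × S_β`,
where `χ` is the character of `k(α) ⊠ sgn(β)`. -/
def relSub (k : Type*) [Field k] (n : ℕ) (α β : List ℕ) : Submodule (GA k n) (GA k n) :=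
  Submodule.span (GA k n)
    {x | ∃ σ : youngSubgroup n (α ++ β),
      x = MonoidAlgebra.single (σ : Equiv.Perm (Fin n)) 1
            - MonoidAlgebra.single 1 (chiHom k n α β σ)}

/-- The signed Young permutation module
`M(α|β) = Ind_{S_α × S_β}^{S_n} (k(α) ⊠ sgn(β)) = k S_n ⊗_{k(S_α×S_β)} (k(α) ⊠ sgn(β))`,
realized as the quotient of `k S_n` by the left submodule generated by
`σ - χ(σ)·1` for `σ ∈ S_α × S_β`. -/
abbrev SYPM (k : Type*) [Field k] (n : ℕ) (α β : List ℕ) : Type _ :=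
  GA k n ⧸ relSub k n α β

/-- A partition: a weakly decreasing finite sequence of positive integers. -/
def IsPartitionL (l : List ℕ) : Prop := l.Pairwise (· ≥ ·) ∧ ∀ x ∈ l, 0 < x

/-- `c_λ^(p)`: the number of compositions of type `λ` all of whose partial sums are
not divisible by `p`. -/
def numCompM (m : ℕ) (l : List ℕ) : ℕ :=
  (l.permutations.dedup.filter fun δ => decide (∀ j < δ.length, ¬ m ∣ (δ.take (j + 1)).sum)).length

/-- `ε_λ = (-1)^(|λ|-ℓ(λ))`. -/
def epsL (l : List ℕ) : ℤ := (-1) ^ (l.sum - l.length)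

/-- `μ ∈ P(n;m)`: `μ` is a partition with `|μ| ≤ n` and `m ∣ n - |μ|`. -/
def MemPnm (n m : ℕ) (μ : List ℕ) : Prop := IsPartitionL μ ∧ μ.sum ≤ n ∧ m ∣ (n - μ.sum)

open Classical in
/-- The multiplicity `c_μ^(p)` when `μ ∈ P(n;p)` and `ε_μ = -1`, else `0`. -/
def multNeg (p n : ℕ) (μ : List ℕ) : ℕ :=
  if MemPnm n p μ ∧ epsL μ = -1 then numCompM p μ else 0

open Classical in
/-- The multiplicity `c_μ^(p)` when `μ ∈ P(n;p)` and `ε_μ = 1`, else `0`. -/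
def multPos (p n : ℕ) (μ : List ℕ) : ℕ :=
  if MemPnm n p μ ∧ epsL μ = 1 then numCompM p μ else 0

/-- The one-part composition `(t)`, interpreted as the empty composition when `t = 0`. -/
def onePart (t : ℕ) : List ℕ := if t = 0 then [] else [t]

open scoped DirectSum
noncomputable section
universe u

def isoSet (R : Type u) [Ring R] : Setoid (ModuleCat.{u} R) where
  r A B := Nonempty (A ≃ₗ[R] B)
  iseqv := ⟨fun _ => ⟨LinearEquiv.refl _ _⟩, fun ⟨e⟩ => ⟨e.symm⟩, fun ⟨e⟩ ⟨f⟩ => ⟨e.trans f⟩⟩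

def IsoCl (R : Type u) [Ring R] : Type _ := Quotient (isoSet R)

def cls (R : Type u) [Ring R] (M : Type u) [AddCommGroup M] [Module R M] : IsoCl R :=
  Quotient.mk (isoSet R) (ModuleCat.of R M)

section
variable {R : Type u} [Ring R]

lemma cls_eq {M N : Type u} [AddCommGroup M] [Module R M] [AddCommGroup N] [Module R N] :
    cls R M = cls R N ↔ Nonempty (M ≃ₗ[R] N) :=
  ⟨fun h => Quotient.exact h, fun h => Quotient.sound (s := isoSet R) h⟩

instance : Add (IsoCl R) where
  add := Quotient.map₂ (fun A B => ModuleCat.of R (A × B))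
    (fun _ _ ⟨e⟩ _ _ ⟨f⟩ => ⟨LinearEquiv.prodCongr e f⟩)

instance : Zero (IsoCl R) where
  zero := cls R PUnit

instance : AddCommMonoid (IsoCl R) where
  nsmul := nsmulRec
  add_assoc := by
    rintro ⟨a⟩ ⟨b⟩ ⟨c⟩
    exact Quotient.sound (s := isoSet R) ⟨LinearEquiv.prodAssoc R a b c⟩
  zero_add := by
    rintro ⟨a⟩
    exact Quotient.sound (s := isoSet R) ⟨LinearEquiv.uniqueProd⟩
  add_zero := by
    rintro ⟨a⟩
    exact Quotient.sound (s := isoSet R) ⟨LinearEquiv.prodUnique⟩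
  add_comm := by
    rintro ⟨a⟩ ⟨b⟩
    exact Quotient.sound (s := isoSet R) ⟨LinearEquiv.prodComm R a b⟩

lemma cls_prod (M N : Type u) [AddCommGroup M] [Module R M] [AddCommGroup N] [Module R N] :
    cls R (M × N) = cls R M + cls R N := rfl

lemma cls_zero (M : Type u) [AddCommGroup M] [Module R M] [Subsingleton M] :
    cls R M = 0 := by
  have : Unique M := uniqueOfSubsingleton 0
  exact cls_eq.2 ⟨(0 : M ≃ₗ[R] PUnit.{u+1})⟩

lemma cls_directSum (ι : Type) [Fintype ι] (M : ι → Type u) [∀ i, AddCommGroup (M i)]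
    [∀ i, Module R (M i)] : cls R (⨁ i, M i) = ∑ i, cls R (M i) := by
  classical
  revert M
  refine Fintype.induction_empty_option (P := fun ι _ => ∀ (M : ι → Type u)
    [∀ i, AddCommGroup (M i)] [∀ i, Module R (M i)],
      cls R (⨁ i, M i) = ∑ i, cls R (M i)) ?_ ?_ ?_ ι
  · intro α β _ e ih M _ _
    let := Fintype.ofEquiv β e.symm
    rw [← Equiv.sum_comp e, ← ih (fun a => M (e a))]
    exact cls_eq.2 ⟨DirectSum.lequivCongrLeft R e.symm⟩
  · intro M _ _
    simp only [Finset.univ_eq_empty, Finset.sum_empty]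
    exact cls_zero _
  · intro α _ ih M _ _
    rw [Fintype.sum_option, ← ih, ← cls_prod]
    exact cls_eq.2 ⟨DirectSum.lequivProdDirectSum R⟩

lemma cls_sup {M : Type u} [AddCommGroup M] [Module R M] (A B : Submodule R M)
    (h : Disjoint A B) : cls R (A ⊔ B : Submodule R M) = cls R A + cls R B := by
  rw [← cls_prod]
  refine (cls_eq.2 ⟨?_⟩).symm
  have hinj : Function.Injective (A.subtype.coprod B.subtype) := by
    rw [← LinearMap.ker_eq_bot, LinearMap.ker_coprod_of_disjoint_range]
    · simp
    · simpa using h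
  refine (LinearEquiv.ofInjective _ hinj).trans (LinearEquiv.ofEq _ _ ?_)
  rw [LinearMap.range_coprod]; simp

end
end

noncomputable section

/-- sign of an ordered pair -/
def aS (k : Type*) [Field k] {n : ℕ} (i j : Fin n) : k := if i < j then -1 else 1

def epsO (k : Type*) [Field k] {n : ℕ} (σ : Equiv.Perm (Fin n)) (O : Finset (Fin n)) : k :=
  ∏ i ∈ O, ∏ j ∈ O, if i < j then (if σ i < σ j then 1 else -1) else 1

def AS (k : Type*) [Field k] {n : ℕ} (O : Finset (Fin n)) (j : Fin n) : k := ∏ i ∈ O, aS k i j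

section
variable {k : Type*} [Field k] {n : ℕ}

lemma aS_self (i : Fin n) : aS k i i = 1 := by simp [aS]
lemma aS_sq (i j : Fin n) : aS k i j * aS k i j = 1 := by unfold aS; split_ifs <;> simp
lemma aS_anti {i j : Fin n} (h : i ≠ j) : aS k i j = - aS k j i := by
  unfold aS; rcases lt_or_gt_of_ne h with h | h <;> simp [h, h.not_gt]
lemma AS_sq (O : Finset (Fin n)) (j : Fin n) : AS k O j * AS k O j = 1 := by
  rw [AS, ← Finset.prod_mul_distrib]; exact Finset.prod_eq_one fun i _ => aS_sq i j

lemma AS_insert {O : Finset (Fin n)} {x : Fin n} (hx : x ∉ O) (j : Fin n) :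
    AS k (insert x O) j = aS k x j * AS k O j := by
  rw [AS, Finset.prod_insert hx, AS]

lemma epsO_insert (σ : Equiv.Perm (Fin n)) {O : Finset (Fin n)} {x : Fin n} (hx : x ∉ O) :
    epsO k σ (insert x O) = epsO k σ O * (AS k O x * AS k (O.map σ.toEmbedding) (σ x)) := by
  have h : ∀ i ∈ O, (if x < i then (if σ x < σ i then (1:k) else -1) else 1) *
      (if i < x then (if σ i < σ x then 1 else -1) else 1) = aS k i x * aS k (σ i) (σ x) := by
    intro i hi
    have hne : i ≠ x := fun e => hx (e ▸ hi)
    have hne' : σ i ≠ σ x := fun e => hne (σ.injective e)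
    unfold aS
    rcases lt_or_gt_of_ne hne with h1 | h1 <;> rcases lt_or_gt_of_ne hne' with h2 | h2 <;>
      simp [h1, h2, h1.not_gt, h2.not_gt]
  unfold epsO AS
  rw [Finset.prod_insert hx, Finset.prod_insert hx]
  simp only [lt_irrefl, if_false, one_mul]
  rw [Finset.prod_congr rfl (fun i (_ : i ∈ O) => Finset.prod_insert hx),
    Finset.prod_mul_distrib, Finset.prod_map]
  simp only [Equiv.coe_toEmbedding]
  have hp := Finset.prod_congr rfl h
  rw [Finset.prod_mul_distrib, Finset.prod_mul_distrib] at hp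
  linear_combination (∏ x ∈ O, ∏ y ∈ O, if x < y then if σ x < σ y then (1:k) else -1 else 1) * hp

lemma epsO_mul (σ τ : Equiv.Perm (Fin n)) (O : Finset (Fin n)) :
    epsO k (σ * τ) O = epsO k σ (O.map τ.toEmbedding) * epsO k τ O := by
  induction O using Finset.induction_on with
  | empty => simp [epsO]
  | insert x O hx ih =>
    have hx' : τ x ∉ O.map τ.toEmbedding := by simpa using hx
    have e : (insert x O).map τ.toEmbedding = insert (τ x) (O.map τ.toEmbedding) := by
      simp [Finset.map_insert]
    have e2 : (O.map τ.toEmbedding).map σ.toEmbedding = O.map (σ * τ).toEmbedding := by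
      rw [Finset.map_map]; rfl
    rw [e, epsO_insert _ hx, epsO_insert _ hx, epsO_insert _ hx', ih, e2, Equiv.Perm.mul_apply]
    have := AS_sq (k := k) (O.map τ.toEmbedding) (τ x)
    linear_combination (-epsO k σ (O.map τ.toEmbedding) * epsO k τ O * AS k O x * AS k (O.map (σ * τ).toEmbedding) (σ (τ x))) * this

lemma epsO_fix (σ : Equiv.Perm (Fin n)) (O : Finset (Fin n)) (h : ∀ x ∈ O, σ x = x) :
    epsO k σ O = 1 := by
  refine Finset.prod_eq_one fun i hi => Finset.prod_eq_one fun j hj => ?_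
  rw [h i hi, h j hj]; split_ifs <;> rfl

lemma epsO_sq (σ : Equiv.Perm (Fin n)) (O : Finset (Fin n)) : epsO k σ O * epsO k σ O = 1 := by
  unfold epsO
  simp only [← Finset.prod_mul_distrib]
  refine Finset.prod_eq_one fun i hi => Finset.prod_eq_one fun j hj => ?_
  split_ifs <;> simp

lemma epsO_swap (O : Finset (Fin n)) {x y : Fin n} (hx : x ∈ O) (hy : y ∈ O) (hxy : x ≠ y) :
    epsO k (Equiv.swap x y) O = -1 := by
  obtain ⟨O', h1, h2, rfl⟩ : ∃ O' : Finset (Fin n), x ∉ O' ∧ y ∉ O' ∧ O = insert x (insert y O') := by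
    refine ⟨(O.erase x).erase y, by simp, by simp, ?_⟩
    rw [Finset.insert_erase (by simp [hy, hxy.symm]), Finset.insert_erase hx]
  have hfix : ∀ z ∈ O', Equiv.swap x y z = z := fun z hz =>
    Equiv.swap_apply_of_ne_of_ne (fun e => h1 (e ▸ hz)) (fun e => h2 (e ▸ hz))
  have hm : O'.map (Equiv.swap x y).toEmbedding = O' := by
    ext z
    simp only [Finset.mem_map, Equiv.coe_toEmbedding]
    constructor
    · rintro ⟨w, hw, rfl⟩; rwa [hfix w hw]
    · intro hz; exact ⟨z, hz, hfix z hz⟩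
  have e : (insert y O').map (Equiv.swap x y).toEmbedding = insert x O' := by
    rw [Finset.map_insert, hm]; simp
  rw [epsO_insert _ (by simp [hxy, h1]), epsO_insert _ h2, epsO_fix _ _ hfix, e, hm,
    AS_insert h2, AS_insert h1, Equiv.swap_apply_left, Equiv.swap_apply_right, aS_anti hxy]
  have a := AS_sq (k := k) O' x
  have b := AS_sq (k := k) O' y
  have c := aS_sq (k := k) y x
  linear_combination (-AS k O' x * AS k O' x * AS k O' y * AS k O' y) * c
    - AS k O' y * AS k O' y * a - b

lemma epsO_sign (O : Finset (Fin n)) (P : Fin n → Prop) [DecidablePred P] (hP : ∀ x, x ∈ O ↔ P x)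
    (σ : Equiv.Perm (Fin n)) (h : ∀ x, P (σ x) ↔ P x) :
    epsO k σ O = (((Equiv.Perm.sign (σ.subtypePerm h) : ℤˣ) : ℤ) : k) := by
  have key : ∀ τ : Equiv.Perm {x // P x},
      epsO k (Equiv.Perm.ofSubtype τ) O = (((Equiv.Perm.sign τ : ℤˣ) : ℤ) : k) := by
    intro τ
    induction τ using Equiv.Perm.swap_induction_on' with
    | one => simp only [map_one]; rw [epsO_fix _ _ (fun x _ => rfl)]; simp
    | mul_swap τ x y hxy ih =>
      have hm : O.map (Equiv.Perm.ofSubtype (Equiv.swap x y)).toEmbedding = O := by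
        apply Finset.eq_of_subset_of_card_le
        · intro z hz
          simp only [Finset.mem_map, Equiv.coe_toEmbedding] at hz
          obtain ⟨w, hw, rfl⟩ := hz
          rw [hP] at hw ⊢
          rw [Equiv.Perm.ofSubtype_apply_of_mem _ hw]
          exact Subtype.property _
        · simp
      rw [map_mul, epsO_mul, hm, ih, Equiv.Perm.ofSubtype_swap_eq,
        epsO_swap O ((hP _).2 x.2) ((hP _).2 y.2) (fun e => hxy (Subtype.ext e))]
      simp [Equiv.Perm.sign_swap hxy]
  rw [← key]
  unfold epsO
  refine Finset.prod_congr rfl fun i hi => Finset.prod_congr rfl fun j hj => ?_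
  rw [Equiv.Perm.ofSubtype_apply_of_mem _ ((hP i).1 hi), Equiv.Perm.ofSubtype_apply_of_mem _ ((hP j).1 hj)]
  rfl

end
end

noncomputable section

def oddSet {n : ℕ} (q : ℕ) (w : Fin n → ℕ) : Finset (Fin n) := Finset.univ.filter fun x => w x = q

lemma mem_oddSet {n : ℕ} (q : ℕ) (w : Fin n → ℕ) (x : Fin n) : x ∈ oddSet q w ↔ w x = q := by
  simp [oddSet]

lemma oddSet_comp {n : ℕ} (q : ℕ) (w : Fin n → ℕ) (σ : Equiv.Perm (Fin n)) :
    oddSet q (w ∘ σ.symm) = (oddSet q w).map σ.toEmbedding := by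
  ext x
  simp only [mem_oddSet, Finset.mem_map, Equiv.coe_toEmbedding, Function.comp]
  constructor
  · intro h; exact ⟨σ.symm x, h, by simp⟩
  · rintro ⟨y, h, rfl⟩; simpa using h

def rhoW (k : Type*) [Field k] (n q : ℕ) :
    Representation k (Equiv.Perm (Fin n)) ((Fin n → ℕ) →₀ k) where
  toFun σ := Finsupp.linearCombination k
    (fun w => Finsupp.single (w ∘ σ.symm) (epsO k σ (oddSet q w)))
  map_one' := by
    ext w : 2
    simp [epsO_fix (1 : Equiv.Perm (Fin n)) (oddSet q w) (fun _ _ => rfl)]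
    rfl
  map_mul' σ τ := by
    ext w : 2
    simp only [LinearMap.comp_apply, Finsupp.lsingle_apply, Finsupp.linearCombination_single,
      one_smul, Module.End.mul_apply, epsO_mul, oddSet_comp]
    rw [Finsupp.smul_single, smul_eq_mul, mul_comm]
    rfl

def Md (k : Type*) [Field k] (n _q : ℕ) := (Fin n → ℕ) →₀ k

instance (k : Type*) [Field k] (n q : ℕ) : AddCommGroup (Md k n q) :=
  inferInstanceAs (AddCommGroup ((Fin n → ℕ) →₀ k))

instance (k : Type*) [Field k] (n q : ℕ) : Module k (Md k n q) :=
  inferInstanceAs (Module k ((Fin n → ℕ) →₀ k))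

def toF (k : Type*) [Field k] (n q : ℕ) : Md k n q ≃ₗ[k] ((Fin n → ℕ) →₀ k) :=
  LinearEquiv.refl k _

def actM (k : Type*) [Field k] (n q : ℕ) : GA k n →+* Module.End k (Md k n q) :=
  ((rhoW k n q).asAlgebraHom : GA k n →+* Module.End k ((Fin n → ℕ) →₀ k))

instance (k : Type*) [Field k] (n q : ℕ) : Module (GA k n) (Md k n q) :=
  Module.compHom _ (actM k n q)

lemma toF_smul (k : Type*) [Field k] (n q : ℕ) (r : GA k n) (x : Md k n q) :
    toF k n q (r • x) = (rhoW k n q).asAlgebraHom r (toF k n q x) := rfl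

def eW (k : Type*) [Field k] {n : ℕ} (q : ℕ) (w : Fin n → ℕ) : Md k n q :=
  (toF k n q).symm (Finsupp.single w 1)

section
variable {k : Type*} [Field k] {n : ℕ}

lemma single_smul_eW (q : ℕ) (w : Fin n → ℕ) (σ : Equiv.Perm (Fin n)) (c : k) :
    (MonoidAlgebra.single σ c : GA k n) • eW k q w
      = (c * epsO k σ (oddSet q w)) • eW k q (w ∘ σ.symm) := by
  apply (toF k n q).injective
  rw [toF_smul, Representation.asAlgebraHom_single]
  change c • (rhoW k n q σ (Finsupp.single w 1)) =
    (c * epsO k σ (oddSet q w)) • (Finsupp.single (w ∘ σ.symm) 1 : (Fin n → ℕ) →₀ k)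
  simp [rhoW]

/-- the span of a set of words -/
def spW (k : Type*) [Field k] {n : ℕ} (q : ℕ) (S : Set (Fin n → ℕ)) : Submodule (GA k n) (Md k n q) :=
  Submodule.span (GA k n) (eW k q '' S)

/-- all basis elements related -/
lemma eW_comp_mem (q : ℕ) (w : Fin n → ℕ) (σ : Equiv.Perm (Fin n)) :
    eW k q (w ∘ σ.symm) ∈ spW k q {w} := by
  have h := single_smul_eW q w σ (epsO k σ (oddSet q w))
  rw [epsO_sq, one_smul] at h
  rw [← h]
  exact Submodule.smul_mem _ _ (Submodule.subset_span ⟨w, rfl, rfl⟩)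

lemma exists_perm_of_count {w w' : Fin n → ℕ}
    (h : ∀ a, (oddSet a w).card = (oddSet a w').card) : ∃ σ : Equiv.Perm (Fin n), w' = w ∘ σ.symm := by
  have e : ∀ a, Nonempty ({x // w' x = a} ≃ {x // w x = a}) := by
    intro a
    refine ⟨Fintype.equivOfCardEq ?_⟩
    rw [Fintype.card_subtype, Fintype.card_subtype]
    exact (h a).symm
  refine ⟨(Equiv.ofFiberEquiv fun a => (e a).some).symm, ?_⟩
  funext x
  exact (Equiv.ofFiberEquiv_map (fun a => (e a).some) x).symm

lemma spW_eq_of_count (q : ℕ) (S : Set (Fin n → ℕ)) (w : Fin n → ℕ) (hw : w ∈ S)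
    (h : ∀ w' ∈ S, ∀ a, (oddSet a w).card = (oddSet a w').card) :
    spW k q S = spW k q {w} := by
  apply le_antisymm
  · refine Submodule.span_le.2 ?_
    rintro _ ⟨w', hw', rfl⟩
    obtain ⟨σ, rfl⟩ := exists_perm_of_count (h w' hw')
    exact eW_comp_mem q w σ
  · exact Submodule.span_mono (Set.image_mono (by simpa using hw))

/-- `G`-stable sets of words have supported spans -/
lemma spW_supported (q : ℕ) (S : Set (Fin n → ℕ)) (hS : ∀ w ∈ S, ∀ σ : Equiv.Perm (Fin n), w ∘ σ.symm ∈ S)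
    (x : Md k n q) (hx : x ∈ spW k q S) :
    (toF k n q) x ∈ Finsupp.supported k k S := by
  induction hx using Submodule.span_induction with
  | mem x h =>
    obtain ⟨w, hw, rfl⟩ := h
    simpa [eW] using Finsupp.single_mem_supported k 1 hw
  | zero => simp
  | add x y _ _ hx hy => rw [map_add]; exact add_mem hx hy
  | smul a x _ hx =>
    induction a using MonoidAlgebra.induction_linear with
    | zero => simp
    | add f g hf hg => rw [add_smul, map_add]; exact add_mem hf hg
    | single σ c =>
      rw [toF_smul, Representation.asAlgebraHom_single]
      refine Submodule.smul_mem _ _ ?_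
      generalize (toF k n q) x = y at hx
      rw [Finsupp.supported_eq_span_single] at hx
      induction hx using Submodule.span_induction with
      | mem x h =>
        obtain ⟨w, hw, rfl⟩ := h
        simpa [rhoW] using Finsupp.single_mem_supported k _ (hS w hw σ)
      | zero => simp
      | add x y _ _ hx hy => rw [map_add]; exact add_mem hx hy
      | smul a x _ hx => rw [map_smul]; exact Submodule.smul_mem _ _ hx

lemma spW_disjoint (q : ℕ) (S T : Set (Fin n → ℕ))
    (hS : ∀ w ∈ S, ∀ σ : Equiv.Perm (Fin n), w ∘ σ.symm ∈ S)
    (hT : ∀ w ∈ T, ∀ σ : Equiv.Perm (Fin n), w ∘ σ.symm ∈ T) (hST : Disjoint S T) :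
    Disjoint (spW k q S) (spW k q T) := by
  rw [Submodule.disjoint_def]
  intro x hx hy
  have := (Finsupp.disjoint_supported_supported (M := k) (R := k) hST)
  rw [Submodule.disjoint_def] at this
  have h := this _ (spW_supported q S hS x hx) (spW_supported q T hT x hy)
  simpa using h

end

/-- Lemma A -/
lemma sypm_iso_span {k : Type*} [Field k] {n : ℕ} (α β : List ℕ) (q : ℕ) (w : Fin n → ℕ)
    (h1 : ∀ σ : Equiv.Perm (Fin n), σ ∈ youngSubgroup n (α ++ β) ↔ w ∘ σ.symm = w)
    (h2 : ∀ σ : youngSubgroup n (α ++ β), chiHom k n α β σ = epsO k (σ : Equiv.Perm (Fin n)) (oddSet q w)) :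
    Nonempty (SYPM k n α β ≃ₗ[GA k n] spW k q {w}) := by
  classical
  set φ : GA k n →ₗ[GA k n] Md k n q := LinearMap.toSpanSingleton (GA k n) _ (eW k q w) with hφ
  have hr : LinearMap.range φ = spW k q {w} := by
    rw [hφ, LinearMap.range_toSpanSingleton, spW, Set.image_singleton]
  have hker : LinearMap.ker φ = relSub k n α β := by
    apply le_antisymm
    · -- a `k`-linear inverse
      let Qm := SYPM k n α β
      let qm : GA k n →ₗ[k] Qm := (Submodule.mkQ (relSub k n α β)).restrictScalars k
      have hq : ∀ (g : Equiv.Perm (Fin n)) (h : youngSubgroup n (α ++ β)),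
          qm (MonoidAlgebra.single (g * (h : Equiv.Perm (Fin n))) 1)
            = chiHom k n α β h • qm (MonoidAlgebra.single g 1) := by
        intro g h
        rw [← map_smul]
        change Submodule.Quotient.mk _ = Submodule.Quotient.mk _
        rw [Submodule.Quotient.eq]
        have : (MonoidAlgebra.single g 1 : GA k n) • (MonoidAlgebra.single (h : Equiv.Perm (Fin n)) 1
            - MonoidAlgebra.single 1 (chiHom k n α β h)) ∈ relSub k n α β :=
          Submodule.smul_mem _ _ (Submodule.subset_span ⟨h, rfl⟩)
        convert this using 1
        rw [smul_eq_mul, mul_sub, MonoidAlgebra.single_mul_single, MonoidAlgebra.single_mul_single,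
          MonoidAlgebra.smul_single]
        simp
      let ψ : ((Fin n → ℕ) →₀ k) →ₗ[k] Qm := Finsupp.linearCombination k fun v =>
        if hv : ∃ g : Equiv.Perm (Fin n), w ∘ g.symm = v then
          epsO k hv.choose (oddSet q w) • qm (MonoidAlgebra.single hv.choose 1) else 0
      have key : ∀ x : GA k n, ψ ((toF k n q) (φ x)) = qm x := by
        intro x
        induction x using MonoidAlgebra.induction_linear with
        | zero => simp
        | add f g hf hg => simp only [map_add, hf, hg]
        | single g c =>
          have e0 : φ (MonoidAlgebra.single g c) = (c * epsO k g (oddSet q w)) • eW k q (w ∘ g.symm) := by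
            rw [hφ, LinearMap.toSpanSingleton_apply, single_smul_eW]
          have hv : ∃ g' : Equiv.Perm (Fin n), w ∘ g'.symm = w ∘ g.symm := ⟨g, rfl⟩
          have e1 : ψ ((toF k n q) (eW k q (w ∘ g.symm)))
              = epsO k hv.choose (oddSet q w) • qm (MonoidAlgebra.single hv.choose 1) := by
            simp only [eW, LinearEquiv.apply_symm_apply, ψ, Finsupp.linearCombination_single, one_smul]
            rw [dif_pos hv]
          have hmem : g⁻¹ * hv.choose ∈ youngSubgroup n (α ++ β) := by
            rw [h1]
            have := hv.choose_spec
            funext x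
            have h3 := congrFun this (g x)
            simp only [Function.comp, Equiv.symm_apply_apply] at h3
            exact h3
          have hch := h2 ⟨_, hmem⟩
          have e2 := hq g ⟨_, hmem⟩
          simp only [mul_inv_cancel_left] at e2
          have e3 : epsO k hv.choose (oddSet q w) = epsO k g (oddSet q w) * chiHom k n α β ⟨_, hmem⟩ := by
            have := epsO_mul (k := k) g (g⁻¹ * hv.choose) (oddSet q w)
            rw [← oddSet_comp, (h1 _).1 hmem, mul_inv_cancel_left] at this
            rw [this, hch]
          have e4 : chiHom k n α β ⟨_, hmem⟩ * chiHom k n α β ⟨_, hmem⟩ = 1 := by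
            rw [hch]; exact epsO_sq _ _
          have e5 := epsO_sq (k := k) g (oddSet q w)
          have e6 : qm (MonoidAlgebra.single g c) = c • qm (MonoidAlgebra.single g 1) := by
            rw [← map_smul, MonoidAlgebra.smul_single]; simp
          rw [e0, map_smul, map_smul, e1, e2, e3, e6, smul_smul, smul_smul]
          congr 1
          generalize chiHom k n α β ⟨_, hmem⟩ = X at *
          linear_combination c * X * X * e5 + c * e4
      intro x hx
      rw [LinearMap.mem_ker] at hx
      have := key x
      rw [hx, map_zero, map_zero] at this
      exact (Submodule.Quotient.mk_eq_zero _).1 this.symm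
    · refine Submodule.span_le.2 ?_
      rintro _ ⟨σ, rfl⟩
      change φ _ = 0
      rw [hφ, LinearMap.toSpanSingleton_apply, sub_smul, single_smul_eW, single_smul_eW,
        (h1 _).1 σ.2, h2, epsO_fix 1 _ (fun _ _ => rfl)]
      have : w ∘ (Equiv.symm (1 : Equiv.Perm (Fin n))) = w := rfl
      rw [this]; simp
  rw [← hr]
  change Nonempty ((GA k n ⧸ relSub k n α β) ≃ₗ[GA k n] LinearMap.range φ)
  rw [← hker]
  exact ⟨LinearMap.quotKerEquivRange φ⟩
end

noncomputable section

lemma equiv_of_sq {R M : Type*} [Ring R] [AddCommGroup M] [Module R M] (D : M →ₗ[R] M)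
    (A B : Submodule R M) (hA : ∀ x ∈ A, D x ∈ B) (hB : ∀ x ∈ B, D x ∈ A) (m : ℕ)
    (hm : IsUnit (m : R)) (h1 : ∀ x ∈ A, D (D x) = m • x) (h2 : ∀ x ∈ B, D (D x) = m • x) :
    Nonempty (A ≃ₗ[R] B) := by
  obtain ⟨u, hu⟩ := hm.exists_left_inv
  refine ⟨LinearEquiv.ofBijective (D.restrict hA) ⟨?_, ?_⟩⟩
  · rw [injective_iff_map_eq_zero]
    rintro ⟨x, hx⟩ h
    have h0 : D x = 0 := congrArg Subtype.val h
    have h3 := h1 x hx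
    rw [h0, map_zero, ← Nat.cast_smul_eq_nsmul R] at h3
    have h4 := congrArg (u • ·) h3
    simp only [smul_zero, smul_smul, hu, one_smul] at h4
    exact Subtype.ext h4.symm
  · rintro ⟨y, hy⟩
    refine ⟨⟨u • D y, A.smul_mem _ (hB y hy)⟩, Subtype.ext ?_⟩
    change D (u • D y) = y
    rw [map_smul, h2 y hy, ← Nat.cast_smul_eq_nsmul R, smul_smul, hu, one_smul]

def flipW {n : ℕ} (s q : ℕ) (j : Fin n) (w : Fin n → ℕ) : Fin n → ℕ :=
  Function.update w j (Equiv.swap s q (w j))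

def supW {n : ℕ} (s q : ℕ) (w : Fin n → ℕ) : Finset (Fin n) :=
  Finset.univ.filter fun x => w x = s ∨ w x = q

def dF (k : Type*) [Field k] (n s q : ℕ) : ((Fin n → ℕ) →₀ k) →ₗ[k] ((Fin n → ℕ) →₀ k) :=
  Finsupp.linearCombination k
    fun w => ∑ j ∈ supW s q w, Finsupp.single (flipW s q j w) (AS k (oddSet q w) j)

section
variable {k : Type*} [Field k] {n : ℕ} {s q : ℕ}

lemma mem_supW (w : Fin n → ℕ) (x : Fin n) : x ∈ supW s q w ↔ w x = s ∨ w x = q := by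
  simp [supW]

lemma flipW_comp (j : Fin n) (w : Fin n → ℕ) (σ : Equiv.Perm (Fin n)) :
    flipW s q (σ j) (w ∘ σ.symm) = flipW s q j w ∘ σ.symm := by
  funext x
  by_cases h : x = σ j
  · subst h; simp [flipW]
  · have : σ.symm x ≠ j := fun e => h (by rw [← e]; simp)
    simp [flipW, h, this]

lemma supW_comp (w : Fin n → ℕ) (σ : Equiv.Perm (Fin n)) :
    supW s q (w ∘ σ.symm) = (supW s q w).map σ.toEmbedding := by
  ext x
  simp only [mem_supW, Finset.mem_map, Equiv.coe_toEmbedding, Function.comp]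
  constructor
  · intro h; exact ⟨σ.symm x, h, by simp⟩
  · rintro ⟨y, h, rfl⟩; simpa using h

lemma supW_flip (j : Fin n) (w : Fin n → ℕ) (hj : j ∈ supW s q w) :
    supW s q (flipW s q j w) = supW s q w := by
  ext x
  rw [mem_supW] at hj
  simp only [mem_supW, flipW]
  by_cases h : x = j
  · subst h
    rcases hj with h | h <;> simp [h]
  · simp [h]

/-- the odd set of a flipped word -/
lemma oddSet_flip (hsq : s ≠ q) (j : Fin n) (w : Fin n → ℕ) (hj : j ∈ supW s q w) :
    (j ∉ oddSet q w ∧ oddSet q (flipW s q j w) = insert j (oddSet q w)) ∨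
    (j ∉ oddSet q (flipW s q j w) ∧ oddSet q w = insert j (oddSet q (flipW s q j w))) := by
  rw [mem_supW] at hj
  rcases hj with h | h
  · left
    refine ⟨by simp [mem_oddSet, h, hsq], ?_⟩
    ext x
    simp only [mem_oddSet, flipW, Finset.mem_insert]
    by_cases hx : x = j
    · subst hx; simp [h]
    · simp [hx]
  · right
    refine ⟨by simp [mem_oddSet, flipW, h, hsq], ?_⟩
    ext x
    simp only [mem_oddSet, flipW, Finset.mem_insert]
    by_cases hx : x = j
    · subst hx; simp [h]
    · simp [hx]

lemma AS_flip (hsq : s ≠ q) (j l : Fin n) (w : Fin n → ℕ) (hj : j ∈ supW s q w) :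
    AS k (oddSet q (flipW s q j w)) l = aS k j l * AS k (oddSet q w) l := by
  rcases oddSet_flip hsq j w hj with ⟨h1, h2⟩ | ⟨h1, h2⟩
  · rw [h2, AS_insert h1]
  · rw [h2, AS_insert h1, ← mul_assoc, aS_sq, one_mul]

lemma eps_flip (hsq : s ≠ q) (j : Fin n) (w : Fin n → ℕ) (hj : j ∈ supW s q w)
    (σ : Equiv.Perm (Fin n)) :
    AS k (oddSet q w) j * epsO k σ (oddSet q (flipW s q j w))
      = epsO k σ (oddSet q w) * AS k ((oddSet q w).map σ.toEmbedding) (σ j) := by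
  rcases oddSet_flip hsq j w hj with ⟨h1, h2⟩ | ⟨h1, h2⟩
  · rw [h2, epsO_insert _ h1]
    have := AS_sq (k := k) (oddSet q w) j
    linear_combination (epsO k σ (oddSet q w) * AS k ((oddSet q w).map σ.toEmbedding) (σ j)) * this
  · generalize oddSet q (flipW s q j w) = O at *
    have h3 : σ j ∉ O.map σ.toEmbedding := by simpa using h1
    rw [h2, epsO_insert _ h1, Finset.map_insert]
    simp only [Equiv.coe_toEmbedding]
    rw [AS_insert h1, AS_insert h3, aS_self, aS_self]
    have := AS_sq (k := k) (O.map σ.toEmbedding) (σ j)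
    linear_combination (-epsO k σ O * AS k O j) * this

lemma dF_comm (hsq : s ≠ q) (σ : Equiv.Perm (Fin n)) (x : (Fin n → ℕ) →₀ k) :
    dF k n s q (rhoW k n q σ x) = rhoW k n q σ (dF k n s q x) := by
  suffices h : (dF k n s q) ∘ₗ (rhoW k n q σ) = (rhoW k n q σ) ∘ₗ (dF k n s q) from
    LinearMap.congr_fun h x
  ext w : 2
  simp only [LinearMap.comp_apply, Finsupp.lsingle_apply, rhoW, dF, MonoidHom.coe_mk, OneHom.coe_mk,
    Finsupp.linearCombination_single, one_smul, map_sum]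
  rw [supW_comp, Finset.sum_map, Finset.smul_sum]
  refine Finset.sum_congr rfl fun j hj => ?_
  simp only [Equiv.coe_toEmbedding]
  rw [flipW_comp, Finsupp.smul_single, Finsupp.smul_single, oddSet_comp, smul_eq_mul, smul_eq_mul,
    eps_flip hsq j w hj]

lemma dF_sq (hsq : s ≠ q) (h2 : (2 : k) ≠ 0) (w : Fin n → ℕ) :
    dF k n s q (dF k n s q (Finsupp.single w 1)) = (supW s q w).card • Finsupp.single w 1 := by
  simp only [dF, Finsupp.linearCombination_single, one_smul, map_sum]
  have e1 : ∀ j ∈ supW s q w, AS k (oddSet q w) j • ∑ l ∈ supW s q (flipW s q j w),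
      Finsupp.single (flipW s q l (flipW s q j w)) (AS k (oddSet q (flipW s q j w)) l)
      = ∑ l ∈ supW s q w, Finsupp.single (flipW s q l (flipW s q j w))
        (AS k (oddSet q w) j * (aS k j l * AS k (oddSet q w) l)) := by
    intro j hj
    rw [supW_flip j w hj, Finset.smul_sum]
    refine Finset.sum_congr rfl fun l hl => ?_
    rw [AS_flip hsq j l w hj, Finsupp.smul_single, smul_eq_mul]
  rw [Finset.sum_congr rfl e1]
  set F : Fin n → Fin n → ((Fin n → ℕ) →₀ k) := fun j l => Finsupp.single (flipW s q l (flipW s q j w))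
        (AS k (oddSet q w) j * (aS k j l * AS k (oddSet q w) l)) with hF
  have e2 : ∀ j l, F j l + F l j = if j = l then (2 : k) • Finsupp.single w 1 else 0 := by
    intro j l
    split_ifs with h
    · subst h
      have : flipW s q j (flipW s q j w) = w := by
        funext x
        by_cases hx : x = j
        · subst hx; simp [flipW]
        · simp [flipW, hx]
      simp only [hF, this, aS_self, one_mul, AS_sq, ← Finsupp.single_add]
      norm_num
    · have : flipW s q j (flipW s q l w) = flipW s q l (flipW s q j w) := by
        funext x
        by_cases hx : x = j
        · subst hx; simp [flipW, h]
        · by_cases hx' : x = l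
          · subst hx'; simp [flipW, hx]
          · simp [flipW, hx, hx']
      simp only [hF, this, ← Finsupp.single_add]
      rw [aS_anti h]
      ring_nf
      simp
  have e3 : (2 : k) • ∑ j ∈ supW s q w, ∑ l ∈ supW s q w, F j l
      = (2 : k) • ((supW s q w).card • Finsupp.single w 1) := by
    rw [two_smul]
    have e4 : ∑ j ∈ supW s q w, ∑ l ∈ supW s q w, F j l = ∑ j ∈ supW s q w, ∑ l ∈ supW s q w, F l j :=
      Finset.sum_comm
    nth_rewrite 2 [e4]
    simp only [← Finset.sum_add_distrib, e2]
    rw [Finset.sum_congr rfl (fun j hj => Finset.sum_ite_eq (supW s q w) j _),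
      Finset.sum_congr rfl (fun j hj => if_pos hj), Finset.sum_const, smul_comm]
  exact smul_right_injective _ h2 e3

end

def dM (k : Type*) [Field k] (n : ℕ) {s q : ℕ} (hsq : s ≠ q) : Md k n q →ₗ[GA k n] Md k n q where
  toFun x := (toF k n q).symm (dF k n s q (toF k n q x))
  map_add' x y := by simp
  map_smul' r x := by
    apply (toF k n q).injective
    simp only [RingHom.id_apply, toF_smul, LinearEquiv.apply_symm_apply]
    induction r using MonoidAlgebra.induction_linear with
    | zero => simp
    | add f g hf hg => simp only [map_add, LinearMap.add_apply, hf, hg]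
    | single σ c =>
      simp only [Representation.asAlgebraHom_single, LinearMap.smul_apply, map_smul]
      rw [dF_comm hsq]

lemma dM_eW {k : Type*} [Field k] {n : ℕ} {s q : ℕ} (hsq : s ≠ q) (w : Fin n → ℕ) :
    dM k n hsq (eW k q w) = ∑ j ∈ supW s q w, AS k (oddSet q w) j • eW k q (flipW s q j w) := by
  apply (toF k n q).injective
  change dF k n s q (Finsupp.single w 1) = toF k n q _
  rw [map_sum]
  simp only [dF, Finsupp.linearCombination_single, one_smul, map_smul]
  refine Finset.sum_congr rfl fun j _ => ?_
  simp [eW]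

lemma dM_sq {k : Type*} [Field k] {n : ℕ} {s q : ℕ} (hsq : s ≠ q) (h2 : (2 : k) ≠ 0) (w : Fin n → ℕ) :
    dM k n hsq (dM k n hsq (eW k q w)) = (supW s q w).card • eW k q w :=
  dF_sq hsq h2 w

/-- the swapping isomorphism -/
lemma spW_iso {k : Type*} [Field k] {n : ℕ} {s q : ℕ} (hsq : s ≠ q) (h2 : (2 : k) ≠ 0) (m : ℕ)
    (hm : (m : k) ≠ 0) (S T : Set (Fin n → ℕ)) (hS : ∀ w ∈ S, (supW s q w).card = m)
    (hT : ∀ w ∈ T, (supW s q w).card = m)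
    (hST : ∀ w ∈ S, ∀ j ∈ supW s q w, flipW s q j w ∈ T)
    (hTS : ∀ w ∈ T, ∀ j ∈ supW s q w, flipW s q j w ∈ S) :
    Nonempty (spW k q S ≃ₗ[GA k n] spW k q T) := by
  have gen : ∀ A : Set (Fin n → ℕ), ∀ B : Set (Fin n → ℕ),
      (∀ w ∈ A, ∀ j ∈ supW s q w, flipW s q j w ∈ B) → ∀ x ∈ spW k q A, dM k n hsq x ∈ spW k q B := by
    intro A B h x hx
    have : spW k q A ≤ (spW k q B).comap (dM k n hsq) := by
      refine Submodule.span_le.2 ?_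
      rintro _ ⟨w, hw, rfl⟩
      change dM k n hsq (eW k q w) ∈ spW k q B
      rw [dM_eW]
      refine Submodule.sum_mem _ fun j hj => ?_
      have e : AS k (oddSet q w) j • eW k q (flipW s q j w)
          = (MonoidAlgebra.single 1 (AS k (oddSet q w) j) : GA k n) • eW k q (flipW s q j w) := by
        rw [single_smul_eW, epsO_fix 1 _ (fun _ _ => rfl), mul_one]; rfl
      rw [e]
      exact Submodule.smul_mem _ _ (Submodule.subset_span ⟨_, h w hw j hj, rfl⟩)
    exact this hx
  have gen2 : ∀ A : Set (Fin n → ℕ), (∀ w ∈ A, (supW s q w).card = m) →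
      ∀ x ∈ spW k q A, dM k n hsq (dM k n hsq x) = m • x := by
    intro A h x hx
    induction hx using Submodule.span_induction with
    | mem x h' =>
      obtain ⟨w, hw, rfl⟩ := h'
      rw [dM_sq hsq h2, h w hw]
    | zero => simp
    | add x y _ _ hx hy => rw [map_add, map_add, hx, hy, smul_add]
    | smul a x _ hx => rw [map_smul, map_smul, hx, smul_comm]
  refine equiv_of_sq (dM k n hsq) _ _ (gen S T hST) (gen T S hTS) m ?_ (gen2 S hS) (gen2 T hT)
  have := (IsUnit.mk0 _ hm).map (algebraMap k (GA k n))
  rwa [map_natCast] at this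
end

noncomputable section
universe u

lemma blockIdx_nil (x : ℕ) : blockIdx [] x = 0 := rfl

lemma blockIdx_cons (c : ℕ) (γ : List ℕ) (x : ℕ) :
    blockIdx (c :: γ) x = if x < c then 0 else blockIdx γ (x - c) + 1 := by
  unfold blockIdx
  rw [List.length_cons, List.range_succ_eq_map, List.countP_cons, List.countP_map]
  by_cases h : x < c
  · have h0 : ¬ c ≤ x := by omega
    rw [if_pos h]
    simp only [zero_add, List.take_succ_cons, List.take_zero, List.sum_cons, List.sum_nil, add_zero,
      h0, decide_false, Bool.false_eq_true, if_false]
    rw [List.countP_eq_zero]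
    intro j _
    change ¬ (decide (c + (List.take (j + 1) γ).sum ≤ x) = true)
    rw [decide_eq_true_eq]
    omega
  · have h0 : c ≤ x := by omega
    rw [if_neg h]
    simp only [zero_add, List.take_succ_cons, List.take_zero, List.sum_cons, List.sum_nil, add_zero,
      h0, decide_true, if_true]
    congr 1
    apply List.countP_congr
    intro j _
    change decide (c + (List.take (j + 1) γ).sum ≤ x) = true ↔ _
    rw [decide_eq_true_eq, decide_eq_true_eq]
    omega

lemma card_blockIdx (γ : List ℕ) : ∀ a : ℕ,
    ((Finset.range γ.sum).filter (fun x => blockIdx γ x = a)).card = γ.getD a 0 := by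
  induction γ with
  | nil => intro a; simp
  | cons c γ ih =>
    intro a
    have e : (Finset.range (c :: γ).sum).filter (fun x => blockIdx (c :: γ) x = a) =
        (Finset.range c).filter (fun _ => 0 = a) ∪
        ((Finset.range γ.sum).filter (fun x => blockIdx γ x + 1 = a)).map (addLeftEmbedding c) := by
      ext x
      simp only [Finset.mem_filter, Finset.mem_range, List.sum_cons, blockIdx_cons, Finset.mem_union,
        Finset.mem_map, addLeftEmbedding_apply]
      constructor
      · rintro ⟨h1, h2⟩
        split_ifs at h2 with h
        · exact Or.inl ⟨h, h2⟩
        · exact Or.inr ⟨x - c, ⟨by omega, h2⟩, by omega⟩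
      · rintro (⟨h1, h2⟩ | ⟨y, ⟨h1, h2⟩, rfl⟩)
        · exact ⟨by omega, by rw [if_pos h1, h2]⟩
        · refine ⟨by omega, ?_⟩
          rw [if_neg (by omega), ← h2]; simp
    rw [e, Finset.card_union_of_disjoint, Finset.card_map]
    · cases a with
      | zero => simp
      | succ a => simpa using ih a
    · rw [Finset.disjoint_left]
      intro x h1 h2
      simp only [Finset.mem_filter, Finset.mem_range,
        Finset.mem_map, addLeftEmbedding_apply] at h1 h2
      obtain ⟨y, _, rfl⟩ := h2
      omega

/-- the standard word -/
def bW (n : ℕ) (γ : List ℕ) : Fin n → ℕ := fun x => blockIdx γ x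

lemma card_bW {n : ℕ} {γ : List ℕ} (h : γ.sum = n) (a : ℕ) :
    (oddSet a (bW n γ)).card = γ.getD a 0 := by
  subst h
  rw [← card_blockIdx, ← Finset.card_map Fin.valEmbedding]
  congr 1
  ext x
  simp only [Finset.mem_map, mem_oddSet, bW, Fin.valEmbedding_apply, Finset.mem_filter, Finset.mem_range]
  constructor
  · rintro ⟨y, h, rfl⟩; exact ⟨y.2, h⟩
  · rintro ⟨h1, h2⟩; exact ⟨⟨x, h1⟩, h2, rfl⟩

lemma onePart_sum (t : ℕ) : (onePart t).sum = t := by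
  unfold onePart; split_ifs with h <;> simp [h]

lemma oddSet_comp_inj {n : ℕ} (f : ℕ → ℕ) (hf : Function.Injective f) (w : Fin n → ℕ) (a : ℕ) :
    oddSet (f a) (f ∘ w) = oddSet a w := by
  ext x; simp [mem_oddSet, hf.eq_iff]

lemma sypm_word {k : Type u} [Field k] {n : ℕ} (α : List ℕ) (t : ℕ) (h : α.sum + t = n)
    (f : ℕ → ℕ) (hf : Function.Injective f) :
    cls (GA k n) (SYPM k n α (onePart t)) =
      cls (GA k n) (spW k (f α.length) {f ∘ bW n (α ++ onePart t)}) := by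
  refine cls_eq.2 (sypm_iso_span α (onePart t) (f α.length) (f ∘ bW n (α ++ onePart t)) ?_ ?_)
  · intro σ
    constructor
    · intro hσ
      funext x
      have := hσ (σ.symm x)
      rw [Equiv.apply_symm_apply] at this
      simp [bW, this]
    · intro hσ x
      have := congrFun hσ (σ x)
      simp only [Function.comp, Equiv.symm_apply_apply] at this
      exact (hf this).symm
  · intro σ
    rw [oddSet_comp_inj f hf]
    by_cases ht : t = 0
    · have h0 : oddSet α.length (bW n (α ++ onePart t)) = ∅ := by
        rw [← Finset.card_eq_zero, card_bW (by rw [List.sum_append, onePart_sum, h])]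
        simp [onePart, ht]
      rw [h0]
      have h1 : (onePart t).length = 0 := by simp [onePart, ht]
      unfold chiHom
      rw [h1, add_zero, Finset.Ico_self, Finset.prod_empty]
      simp [epsO]
    · have h1 : onePart t = [t] := by simp [onePart, ht]
      have h2 : chiHom k n α (onePart t) σ = blockSign k n (α ++ onePart t) α.length σ := by
        unfold chiHom
        have : Finset.Ico α.length (α.length + (onePart t).length) = {α.length} := by
          rw [h1]; simp
        rw [this, Finset.prod_singleton]
      rw [h2, epsO_sign (oddSet α.length (bW n (α ++ onePart t)))
        (fun x => blockIdx (α ++ onePart t) (x : ℕ) = α.length)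
        (fun x => mem_oddSet _ _ _) (σ : Equiv.Perm (Fin n))
        (fun x => by rw [youngSubgroup_mem σ x])]
      rfl

lemma exists_relabel (β : List ℕ) {α α' : List ℕ} (h : α.Perm α') :
    ∃ f : ℕ → ℕ, Function.Bijective f ∧ f α.length = α.length ∧
      ∀ a, (α' ++ β).getD (f a) 0 = (α ++ β).getD a 0 := by
  induction h with
  | nil => exact ⟨id, Function.bijective_id, rfl, fun _ => rfl⟩
  | cons x _ ih =>
    obtain ⟨f, ⟨h1, h1'⟩, h2, h3⟩ := ih
    refine ⟨fun a => Nat.casesOn a 0 fun b => f b + 1, ⟨?_, ?_⟩, ?_, ?_⟩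
    · intro a b hab
      cases a <;> cases b <;> simp_all [h1.eq_iff]
    · intro a
      cases a with
      | zero => exact ⟨0, rfl⟩
      | succ a => obtain ⟨b, rfl⟩ := h1' a; exact ⟨b + 1, rfl⟩
    · simp [h2]
    · intro a
      cases a with
      | zero => simp
      | succ a => simpa using h3 a
  | swap x y l =>
    refine ⟨Equiv.swap 0 1, Equiv.bijective _, ?_, ?_⟩
    · rw [Equiv.swap_apply_of_ne_of_ne] <;> simp
    · intro a
      match a with
      | 0 => simp
      | 1 => simp
      | a + 2 => rw [Equiv.swap_apply_of_ne_of_ne] <;> simp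
  | trans h1 h2 ih1 ih2 =>
    obtain ⟨f, hf1, hf2, hf3⟩ := ih1
    obtain ⟨g, hg1, hg2, hg3⟩ := ih2
    refine ⟨g ∘ f, hg1.comp hf1, ?_, fun a => ?_⟩
    · rw [Function.comp, hf2, h1.length_eq, hg2]
    · rw [Function.comp, hg3, hf3]

lemma spW_single_eq {k : Type u} [Field k] {n : ℕ} {q : ℕ} {w w' : Fin n → ℕ}
    (h : ∀ a, (oddSet a w).card = (oddSet a w').card) : spW k q {w} = spW k q {w'} := by
  rw [← spW_eq_of_count q {w, w'} w (by simp), ← spW_eq_of_count q {w, w'} w' (by simp)]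
  · rintro v (rfl | rfl) a
    · exact (h a).symm
    · rfl
  · rintro v (rfl | rfl) a
    · rfl
    · exact h a

lemma sypm_perm {k : Type u} [Field k] {n : ℕ} {α α' : List ℕ} (hp : α.Perm α') (t : ℕ)
    (h : α.sum + t = n) :
    cls (GA k n) (SYPM k n α (onePart t)) = cls (GA k n) (SYPM k n α' (onePart t)) := by
  obtain ⟨f, hf1, hf2, hf3⟩ := exists_relabel (onePart t) hp
  have h' : α'.sum + t = n := by rw [← hp.sum_eq, h]
  rw [sypm_word α t h f hf1.1, sypm_word α' t h' id Function.injective_id, hf2]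
  have hl : id α'.length = α.length := hp.length_eq.symm
  rw [hl]
  rw [spW_single_eq (w' := id ∘ bW n (α' ++ onePart t))]
  intro b
  obtain ⟨a, rfl⟩ := hf1.2 b
  rw [oddSet_comp_inj f hf1.1, Function.id_comp, card_bW, card_bW, hf3]
  · rw [List.sum_append, onePart_sum, h']
  · rw [List.sum_append, onePart_sum, h]

/-- words with prescribed content -/
def baseW (n : ℕ) (α : List ℕ) (m : ℕ) (w : Fin n → ℕ) : Prop :=
  (∀ a, a ≠ α.length → a ≠ α.length + 1 → (oddSet a w).card = α.getD a 0) ∧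
    (supW α.length (α.length + 1) w).card = m

def setW (n : ℕ) (α : List ℕ) (m i : ℕ) : Set (Fin n → ℕ) :=
  {w | baseW n α m w ∧ (oddSet α.length w).card = i}

lemma card_supW {n : ℕ} {s q : ℕ} (h : s ≠ q) (w : Fin n → ℕ) :
    (supW s q w).card = (oddSet s w).card + (oddSet q w).card := by
  rw [← Finset.card_union_of_disjoint]
  · congr 1; ext x; simp [mem_supW, mem_oddSet]
  · rw [Finset.disjoint_left]
    intro x h1 h2
    rw [mem_oddSet] at h1 h2
    exact h (h1.symm.trans h2)

lemma setW_stable (n : ℕ) (α : List ℕ) (m i : ℕ) (w : Fin n → ℕ) (hw : w ∈ setW n α m i)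
    (σ : Equiv.Perm (Fin n)) : w ∘ σ.symm ∈ setW n α m i := by
  obtain ⟨⟨h1, h2⟩, h3⟩ := hw
  refine ⟨⟨?_, ?_⟩, ?_⟩
  · intro a ha hb; rw [oddSet_comp, Finset.card_map, h1 a ha hb]
  · rw [supW_comp, Finset.card_map, h2]
  · rw [oddSet_comp, Finset.card_map, h3]

lemma bW_mem {n : ℕ} {α : List ℕ} {m i : ℕ} (h : α.sum + m = n) (hi : i ≤ m) :
    bW n (α ++ [i, m - i]) ∈ setW n α m i := by
  have hs : (α ++ [i, m - i]).sum = n := by simp; omega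
  have h0 : (α ++ [i, m - i]).getD α.length 0 = i := by simp
  have h1 : (α ++ [i, m - i]).getD (α.length + 1) 0 = m - i := by simp
  refine ⟨⟨?_, ?_⟩, ?_⟩
  · intro a ha hb
    rw [card_bW hs]
    rcases lt_or_ge a α.length with h | h
    · rw [List.getD_append _ _ _ _ h]
    · rw [List.getD_eq_default _ _ h, List.getD_eq_default]
      simp; omega
  · rw [card_supW (by omega), card_bW hs, card_bW hs, h0, h1]; omega
  · rw [card_bW hs, h0]

lemma setW_count {n : ℕ} {α : List ℕ} {m i : ℕ} {w w' : Fin n → ℕ} (hw : w ∈ setW n α m i)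
    (hw' : w' ∈ setW n α m i) (a : ℕ) : (oddSet a w).card = (oddSet a w').card := by
  obtain ⟨⟨h1, h2⟩, h3⟩ := hw
  obtain ⟨⟨h1', h2'⟩, h3'⟩ := hw'
  rw [card_supW (by omega)] at h2 h2'
  by_cases ha : a = α.length
  · subst ha; omega
  by_cases hb : a = α.length + 1
  · subst hb; omega
  rw [h1 a ha hb, h1' a ha hb]

/-- class of a signed Young module with total size `n` -/
def vM (k : Type u) [Field k] (n : ℕ) (α : List ℕ) : IsoCl (GA k n) :=
  cls (GA k n) (SYPM k n α (onePart (n - α.sum)))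

lemma setW_cls {k : Type u} [Field k] {n : ℕ} {α : List ℕ} {m i : ℕ} (h : α.sum + m = n)
    (h0 : 0 < i) (hi : i ≤ m) :
    cls (GA k n) (spW k (α.length + 1) (setW n α m i)) = vM k n (α ++ [i]) := by
  have ht : n - (α ++ [i]).sum = m - i := by simp; omega
  have hs : (α ++ [i]).sum + (m - i) = n := by simp; omega
  rw [vM, ht, sypm_word (α ++ [i]) (m - i) hs id Function.injective_id,
    spW_eq_of_count _ _ _ (bW_mem h hi) (fun w' hw' a => setW_count (bW_mem h hi) hw' a)]
  have hl : id (α ++ [i]).length = α.length + 1 := by simp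
  rw [hl, Function.id_comp, spW_single_eq (w' := bW n (α ++ [i] ++ onePart (m - i)))]
  intro a
  rw [card_bW, card_bW]
  · by_cases hmi : m - i = 0
    · rw [hmi]
      have e : α ++ [i, 0] = (α ++ [i]) ++ [0] := by simp
      rw [e]
      simp only [onePart, if_true, List.append_nil]
      rcases lt_or_ge a (α ++ [i]).length with h | h
      · rw [List.getD_append _ _ _ _ h]
      · rw [List.getD_append_right _ _ _ _ h, List.getD_eq_default _ _ h]
        cases a - (α ++ [i]).length <;> simp
    · simp [onePart, hmi]
  · rw [List.sum_append, onePart_sum, hs]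
  · simp; omega

lemma setW_cls_zero {k : Type u} [Field k] {n : ℕ} {α : List ℕ} {m : ℕ} (h : α.sum + m = n)
    (hm : 0 < m) :
    cls (GA k n) (spW k (α.length + 1) (setW n α m 0)) = vM k n α := by
  have ht : n - α.sum = m := by omega
  have h1 : onePart m = [m] := by simp [onePart, hm.ne']
  let f : ℕ → ℕ := fun a => if a < α.length then a else a + 1
  have hf : Function.Injective f := by
    intro a b hab
    simp only [f] at hab
    split_ifs at hab <;> omega
  have hl : f α.length = α.length + 1 := by simp [f]
  have hmem : f ∘ bW n (α ++ [m]) ∈ setW n α m 0 := by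
    have hs : (α ++ [m]).sum = n := by simp; omega
    have key : ∀ a, (oddSet (f a) (f ∘ bW n (α ++ [m]))).card = (α ++ [m]).getD a 0 := by
      intro a; rw [oddSet_comp_inj f hf, card_bW hs]
    have key0 : (oddSet α.length (f ∘ bW n (α ++ [m]))).card = 0 := by
      rw [Finset.card_eq_zero, Finset.eq_empty_iff_forall_notMem]
      intro x hx
      simp only [mem_oddSet, f, Function.comp] at hx
      split_ifs at hx <;> omega
    refine ⟨⟨?_, ?_⟩, key0⟩
    · intro a ha hb
      rcases lt_or_ge a α.length with h | h
      · have := key a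
        simp only [f, if_pos h] at this
        rw [this, List.getD_append _ _ _ _ h]
      · have := key (a - 1)
        have e : f (a - 1) = a := by simp only [f]; split_ifs <;> omega
        rw [e] at this
        rw [this, List.getD_eq_default _ _ h, List.getD_eq_default]
        simp; omega
    · have := key α.length
      rw [hl] at this
      rw [card_supW (by omega), key0, this]; simp
  rw [vM, ht, sypm_word α m h f hf, hl, h1,
    spW_eq_of_count _ _ (f ∘ bW n (α ++ [m])) hmem (fun w' hw' a => setW_count hmem hw' a)]

lemma cls_spW_biUnion {k : Type u} [Field k] {n : ℕ} (q : ℕ) (α : List ℕ) (m : ℕ) (F : Finset ℕ) :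
    cls (GA k n) (spW k q (⋃ i ∈ F, setW n α m i)) = ∑ i ∈ F, cls (GA k n) (spW k q (setW n α m i)) := by
  induction F using Finset.induction_on with
  | empty =>
    have : spW k q (⋃ i ∈ (∅ : Finset ℕ), setW n α m i) = ⊥ := by simp [spW]
    rw [this, Finset.sum_empty]
    exact cls_zero _
  | insert i F hi ih =>
    rw [Finset.sum_insert hi, ← ih, Finset.set_biUnion_insert]
    have : spW k q (setW n α m i ∪ ⋃ x ∈ F, setW n α m x) =
        spW k q (setW n α m i) ⊔ spW k q (⋃ x ∈ F, setW n α m x) := by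
      rw [spW, Set.image_union, Submodule.span_union]; rfl
    rw [this, cls_sup]
    apply spW_disjoint
    · exact setW_stable n α m i
    · intro w hw σ
      simp only [Set.mem_iUnion] at hw ⊢
      obtain ⟨j, hj, h⟩ := hw
      exact ⟨j, hj, setW_stable n α m j w h σ⟩
    · rw [Set.disjoint_left]
      intro w h1 h2
      simp only [Set.mem_iUnion] at h2
      obtain ⟨j, hj, h⟩ := h2
      have : i = j := h1.2.symm.trans h.2
      exact hi (this ▸ hj)

lemma baseW_flip {n : ℕ} {α : List ℕ} {m : ℕ} {w : Fin n → ℕ} (h : baseW n α m w) (j : Fin n)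
    (hj : j ∈ supW α.length (α.length + 1) w) :
    baseW n α m (flipW α.length (α.length + 1) j w) ∧
      (Even (oddSet α.length (flipW α.length (α.length + 1) j w)).card ↔
        ¬ Even (oddSet α.length w).card) := by
  have hs := supW_flip j w hj
  refine ⟨⟨?_, ?_⟩, ?_⟩
  · intro a ha hb
    rw [← h.1 a ha hb]
    congr 1
    ext x
    simp only [mem_oddSet, flipW]
    by_cases hx : x = j
    · subst hx
      rw [mem_supW] at hj
      rcases hj with hj | hj <;> simp [hj, Ne.symm ha, Ne.symm hb]
    · simp [hx]
  · rw [hs, h.2]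
  · have h1 := card_supW (s := α.length) (q := α.length + 1) (by omega) w
    have h2 := card_supW (s := α.length) (q := α.length + 1) (by omega) (flipW α.length (α.length + 1) j w)
    rw [hs] at h2
    rcases oddSet_flip (s := α.length) (q := α.length + 1) (by omega) j w hj with ⟨h3, h4⟩ | ⟨h3, h4⟩
    · have := congrArg Finset.card h4
      rw [Finset.card_insert_of_notMem h3] at this
      rw [← Nat.even_add_one]
      have e : (oddSet α.length w).card = (oddSet α.length (flipW α.length (α.length + 1) j w)).card + 1 := by
        omega
      rw [e, Nat.even_add_one, Nat.even_add_one, not_not]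
    · have := congrArg Finset.card h4
      rw [Finset.card_insert_of_notMem h3] at this
      have e : (oddSet α.length (flipW α.length (α.length + 1) j w)).card = (oddSet α.length w).card + 1 := by
        omega
      rw [e, Nat.even_add_one]

/-- The Koszul recursion -/
lemma vM_rec {k : Type u} [Field k] {n : ℕ} (h2 : (2 : k) ≠ 0) (α : List ℕ) (m : ℕ)
    (h : α.sum + m = n) (hm : (m : k) ≠ 0) :
    vM k n α + ∑ i ∈ (Finset.Icc 1 m).filter (fun i => Even i), vM k n (α ++ [i])
      = ∑ i ∈ (Finset.Icc 1 m).filter (fun i => ¬ Even i), vM k n (α ++ [i]) := by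
  have hm0 : 0 < m := Nat.pos_of_ne_zero (by rintro rfl; simp at hm)
  have mem : ∀ (P : ℕ → Prop) [DecidablePred P] (w : Fin n → ℕ),
      w ∈ (⋃ i ∈ (Finset.range (m + 1)).filter P, setW n α m i) ↔
        baseW n α m w ∧ P (oddSet α.length w).card := by
    intro P _ w
    simp only [Set.mem_iUnion, Finset.mem_filter, Finset.mem_range]
    constructor
    · rintro ⟨i, ⟨_, hP⟩, hb, rfl⟩; exact ⟨hb, hP⟩
    · rintro ⟨hb, hP⟩
      refine ⟨_, ⟨?_, hP⟩, hb, rfl⟩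
      have := hb.2
      rw [card_supW (by omega)] at this
      omega
  have key : cls (GA k n) (spW k (α.length + 1) (⋃ i ∈ (Finset.range (m + 1)).filter (fun i => Even i), setW n α m i))
      = cls (GA k n) (spW k (α.length + 1) (⋃ i ∈ (Finset.range (m + 1)).filter (fun i => ¬ Even i), setW n α m i)) := by
    refine cls_eq.2 (spW_iso (s := α.length) (q := α.length + 1) (by omega) h2 m hm _ _ ?_ ?_ ?_ ?_)
    · intro w hw; rw [mem] at hw; exact hw.1.2
    · intro w hw; rw [mem] at hw; exact hw.1.2
    · intro w hw j hj; rw [mem] at hw ⊢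
      obtain ⟨a, b⟩ := baseW_flip hw.1 j hj
      exact ⟨a, by rw [b, not_not]; exact hw.2⟩
    · intro w hw j hj; rw [mem] at hw ⊢
      obtain ⟨a, b⟩ := baseW_flip hw.1 j hj
      exact ⟨a, by rw [b]; exact hw.2⟩
  rw [cls_spW_biUnion, cls_spW_biUnion] at key
  have e1 : (Finset.range (m + 1)).filter (fun i => Even i)
      = insert 0 ((Finset.Icc 1 m).filter (fun i => Even i)) := by
    ext x
    simp only [Finset.mem_filter, Finset.mem_range, Finset.mem_insert, Finset.mem_Icc]
    rcases Nat.eq_zero_or_pos x with rfl | hx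
    · simp
    · constructor
      · rintro ⟨a, b⟩; exact Or.inr ⟨⟨hx, by omega⟩, b⟩
      · rintro (a | ⟨a, b⟩)
        · omega
        · exact ⟨by omega, b⟩
  have e2 : (Finset.range (m + 1)).filter (fun i => ¬ Even i)
      = (Finset.Icc 1 m).filter (fun i => ¬ Even i) := by
    ext x
    simp only [Finset.mem_filter, Finset.mem_range, Finset.mem_Icc]
    rcases Nat.eq_zero_or_pos x with rfl | hx
    · simp
    · constructor
      · rintro ⟨a, b⟩; exact ⟨⟨hx, by omega⟩, b⟩
      · rintro ⟨a, b⟩; exact ⟨by omega, b⟩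
  rw [e1, e2, Finset.sum_insert (by simp), setW_cls_zero h hm0] at key
  have e3 : ∀ (P : ℕ → Prop) [DecidablePred P], ∑ i ∈ (Finset.Icc 1 m).filter P, vM k n (α ++ [i])
      = ∑ i ∈ (Finset.Icc 1 m).filter P, cls (GA k n) (spW k (α.length + 1) (setW n α m i)) := by
    intro P _
    refine Finset.sum_congr rfl fun i hi => ?_
    simp only [Finset.mem_filter, Finset.mem_Icc] at hi
    rw [setW_cls h (by omega) (by omega)]
  rw [e3, e3]
  exact key
end

open scoped DirectSum
noncomputable section
universe u

def Good (p : ℕ) : List ℕ → Prop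
  | [] => True
  | i :: δ => ¬ p ∣ (i :: δ).sum ∧ Good p δ

def Comp (p : ℕ) : ℕ → ℕ → Finset (List ℕ)
  | 0, _ => {[]}
  | f + 1, m => if p ∣ m then {[]} else
      (Finset.Icc 1 m).biUnion fun i => (Comp p f (m - i)).image (fun δ => i :: δ)

lemma mem_Comp (p : ℕ) : ∀ (f m : ℕ), m ≤ f → ∀ δ : List ℕ, δ ∈ Comp p f m ↔
    (∀ x ∈ δ, 0 < x) ∧ δ.sum ≤ m ∧ p ∣ m - δ.sum ∧ Good p δ := by
  intro f
  induction f with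
  | zero =>
    intro m hm δ
    obtain rfl : m = 0 := by omega
    cases δ with
    | nil => simp [Comp, Good]
    | cons i δ =>
      simp only [Comp, Finset.mem_singleton, reduceCtorEq, false_iff]
      rintro ⟨h1, h2, -⟩
      have := h1 i (by simp)
      simp at h2; omega
  | succ f ih =>
    intro m hm δ
    rw [Comp]
    split_ifs with h
    · cases δ with
      | nil => simp [Good, h]
      | cons i δ =>
        simp only [Finset.mem_singleton, reduceCtorEq, false_iff]
        rintro ⟨h1, h2, h3, h4, -⟩
        exact h4 ((Nat.dvd_sub_iff_right h2 h).1 h3)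
    · cases δ with
      | nil => simp [Good, h]
      | cons i δ =>
        simp only [Finset.mem_biUnion, Finset.mem_Icc, Finset.mem_image, List.cons.injEq,
          List.mem_cons, forall_eq_or_imp, Good, List.sum_cons]
        constructor
        · rintro ⟨j, ⟨hj1, hj2⟩, δ', hδ, rfl, rfl⟩
          obtain ⟨a, b, c, d⟩ := (ih (m - j) (by omega) _).1 hδ
          have e : m - (j + δ'.sum) = m - j - δ'.sum := by omega
          refine ⟨⟨by omega, a⟩, by omega, by rwa [e], ?_, d⟩
          intro h'
          apply h
          rw [← e] at c
          exact (Nat.dvd_sub_iff_left (by omega) h').1 c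
        · rintro ⟨⟨a, b⟩, c, d, e, g⟩
          refine ⟨i, ⟨by omega, by omega⟩, δ, (ih (m - i) (by omega) _).2 ⟨b, by omega, ?_, g⟩, rfl, rfl⟩
          have e : m - (i + δ.sum) = m - i - δ.sum := by omega
          rwa [← e]

lemma length_le_sum' (δ : List ℕ) (h : ∀ x ∈ δ, 0 < x) : δ.length ≤ δ.sum := by
  induction δ with
  | nil => simp
  | cons i δ ih =>
    have := h i (by simp)
    have := ih (fun x hx => h x (by simp [hx]))
    simp; omega

lemma epsL_cons (i : ℕ) (δ : List ℕ) (hi : 0 < i) (h : ∀ x ∈ δ, 0 < x) :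
    epsL (i :: δ) = (if Even i then -1 else 1) * epsL δ := by
  have hl := length_le_sum' δ h
  unfold epsL
  have e : (i :: δ).sum - (i :: δ).length = (i - 1) + (δ.sum - δ.length) := by
    simp; omega
  rw [e, pow_add]
  congr 1
  split_ifs with h
  · exact Odd.neg_one_pow (by obtain ⟨c, rfl⟩ := h; exact ⟨c - 1, by omega⟩)
  · rw [Nat.not_even_iff_odd] at h
    exact Even.neg_one_pow (by obtain ⟨c, rfl⟩ := h; exact ⟨c, by omega⟩)

def sgnSum (k : Type u) [Field k] (n p : ℕ) (s : ℤ) (f m : ℕ) (α : List ℕ) : IsoCl (GA k n) :=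
  ∑ δ ∈ Comp p f m, (if epsL δ = s then vM k n (α ++ δ) else 0)

lemma sgnSum_succ (k : Type u) [Field k] (n p : ℕ) (s : ℤ) (f m : ℕ) (hm : m ≤ f + 1)
    (h : ¬ p ∣ m) (α : List ℕ) :
    sgnSum k n p s (f + 1) m α =
      ∑ i ∈ (Finset.Icc 1 m).filter (fun i => Even i), sgnSum k n p (-s) f (m - i) (α ++ [i]) +
      ∑ i ∈ (Finset.Icc 1 m).filter (fun i => ¬ Even i), sgnSum k n p s f (m - i) (α ++ [i]) := by
  have hd : (↑(Finset.Icc 1 m) : Set ℕ).PairwiseDisjoint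
      (fun i => (Comp p f (m - i)).image (fun δ => i :: δ)) := by
    intro i _ j _ hij
    simp only [Function.onFun]
    rw [Finset.disjoint_left]
    intro x hx hy
    obtain ⟨a, _, rfl⟩ := Finset.mem_image.1 hx
    obtain ⟨b, _, hb⟩ := Finset.mem_image.1 hy
    simp at hb
    exact hij hb.1.symm
  have key : sgnSum k n p s (f + 1) m α = ∑ i ∈ Finset.Icc 1 m,
      (if Even i then sgnSum k n p (-s) f (m - i) (α ++ [i])
        else sgnSum k n p s f (m - i) (α ++ [i])) := by
    unfold sgnSum
    rw [Comp, if_neg h, Finset.sum_biUnion hd]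
    refine Finset.sum_congr rfl fun i hi => ?_
    rw [Finset.mem_Icc] at hi
    rw [Finset.sum_image (by intro a _ b _ hab; simpa using hab)]
    have hc : ∀ δ ∈ Comp p f (m - i),
        epsL (i :: δ) = (if Even i then -1 else 1) * epsL δ := by
      intro δ hδ
      exact epsL_cons i δ (by omega) ((mem_Comp p f (m - i) (by omega) δ).1 hδ).1
    split_ifs with he
    · refine Finset.sum_congr rfl fun δ hδ => ?_
      have e := hc δ hδ
      rw [if_pos he] at e
      rw [e, List.append_assoc, List.singleton_append]
      congr 1
      apply propext
      constructor <;> intro <;> omega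
    · refine Finset.sum_congr rfl fun δ hδ => ?_
      have e := hc δ hδ
      rw [if_neg he, one_mul] at e
      rw [e, List.append_assoc, List.singleton_append]
  rw [key, Finset.sum_ite]

lemma sgnSum_rel {k : Type u} [Field k] (p : ℕ) [CharP k p] (h2 : (2 : k) ≠ 0) {n : ℕ} :
    ∀ (f m : ℕ) (α : List ℕ), m ≤ f → α.sum + m = n →
      vM k n α + sgnSum k n p (-1) f m α = sgnSum k n p 1 f m α := by
  have base : ∀ (f m : ℕ) (α : List ℕ), Comp p f m = {[]} →
      vM k n α + sgnSum k n p (-1) f m α = sgnSum k n p 1 f m α := by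
    intro f m α h
    simp [sgnSum, h, epsL]
  intro f
  induction f with
  | zero => intro m α _ _; exact base _ _ _ rfl
  | succ f ih =>
    intro m α hm hs
    by_cases h : p ∣ m
    · exact base _ _ _ (by rw [Comp, if_pos h])
    · rw [sgnSum_succ k n p _ f m hm h, sgnSum_succ k n p _ f m hm h, neg_neg]
      have hI : ∀ i ∈ Finset.Icc 1 m, sgnSum k n p 1 f (m - i) (α ++ [i]) =
          vM k n (α ++ [i]) + sgnSum k n p (-1) f (m - i) (α ++ [i]) := by
        intro i hi
        rw [Finset.mem_Icc] at hi
        exact (ih (m - i) (α ++ [i]) (by omega) (by simp; omega)).symm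
      rw [Finset.sum_congr rfl (fun i hi => hI i (Finset.mem_filter.1 hi).1),
        Finset.sum_congr (s₁ := (Finset.Icc 1 m).filter (fun i => ¬ Even i)) rfl
          (fun i hi => hI i (Finset.mem_filter.1 hi).1),
        Finset.sum_add_distrib, Finset.sum_add_distrib, ← add_assoc, ← add_assoc,
        vM_rec h2 α m hs (by rwa [Ne, CharP.cast_eq_zero_iff k p])]
      abel

lemma good_reverse (p : ℕ) (δ : List ℕ) :
    (∀ j < δ.length, ¬ p ∣ (δ.take (j + 1)).sum) ↔ Good p δ.reverse := by
  induction δ using List.reverseRecOn with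
  | nil => simp [Good]
  | append_singleton δ x ih =>
    rw [List.reverse_append, List.reverse_singleton, List.singleton_append, Good, ← ih]
    have e : (x :: δ.reverse).sum = (δ ++ [x]).sum := by simp [add_comm]
    rw [e]
    constructor
    · intro h
      constructor
      · have := h δ.length (by simp)
        rwa [List.take_of_length_le (by simp)] at this
      · intro j hj
        have := h j (by simp; omega)
        rwa [List.take_append_of_le_length (by omega)] at this
    · rintro ⟨h1, h2⟩ j hj
      rcases lt_or_ge j δ.length with h | h
      · rw [List.take_append_of_le_length (by omega)]
        exact h2 j h
      · rwa [List.take_of_length_le (by simp; omega)]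

def CS (p n : ℕ) (s : ℤ) : Finset (List ℕ) := (Comp p n n).filter (fun δ => epsL δ = s)

def srt (δ : List ℕ) : List ℕ := δ.insertionSort (· ≥ ·)

lemma srt_perm (δ : List ℕ) : (srt δ).Perm δ := List.perm_insertionSort _ _

lemma epsL_perm {a b : List ℕ} (h : a.Perm b) : epsL a = epsL b := by
  rw [epsL, epsL, h.sum_eq, h.length_eq]

lemma srt_eq_iff {δ μ : List ℕ} (hμ : μ.Pairwise (· ≥ ·)) : srt δ = μ ↔ δ.Perm μ := by
  constructor
  · rintro rfl; exact (srt_perm δ).symm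
  · intro h
    exact ((srt_perm δ).trans h).eq_of_pairwise' (List.pairwise_insertionSort _ _) hμ

open Classical in
def multS (s : ℤ) (p n : ℕ) (μ : List ℕ) : ℕ :=
  if MemPnm n p μ ∧ epsL μ = s then numCompM p μ else 0

lemma card_fiber (s : ℤ) (p n : ℕ) (μ : List ℕ) :
    ((CS p n s).filter (fun δ => srt δ = μ)).card = multS s p n μ := by
  unfold multS
  split_ifs with h
  · obtain ⟨⟨⟨h1, h2⟩, h3, h4⟩, h5⟩ := h
    have e : (CS p n s).filter (fun δ => srt δ = μ) =
        ((μ.permutations.dedup.filter fun δ =>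
          decide (∀ j < δ.length, ¬ p ∣ (δ.take (j + 1)).sum)).toFinset).image List.reverse := by
      ext δ
      simp only [CS, Finset.mem_filter, mem_Comp p n n le_rfl, srt_eq_iff h1, Finset.mem_image,
        List.mem_toFinset, List.mem_filter, List.mem_dedup, List.mem_permutations,
        decide_eq_true_eq, good_reverse]
      constructor
      · rintro ⟨⟨⟨a, b, c, d⟩, e⟩, g⟩
        exact ⟨δ.reverse, ⟨(List.reverse_perm δ).trans g, by rwa [List.reverse_reverse]⟩,
          List.reverse_reverse _⟩
      · rintro ⟨γ, ⟨a, b⟩, rfl⟩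
        have g : γ.reverse.Perm μ := (List.reverse_perm γ).trans a
        exact ⟨⟨⟨fun x hx => h2 x (g.mem_iff.1 hx), by rwa [g.sum_eq], by rwa [g.sum_eq], b⟩,
          by rwa [epsL_perm g]⟩, g⟩
    rw [e, Finset.card_image_of_injective _ List.reverse_injective, List.toFinset_card_of_nodup]
    · rfl
    · exact (List.nodup_dedup _).filter _
  · rw [Finset.card_eq_zero, Finset.eq_empty_iff_forall_notMem]
    intro δ hδ
    simp only [CS, Finset.mem_filter, mem_Comp p n n le_rfl] at hδ
    obtain ⟨⟨⟨a, b, c, d⟩, e⟩, rfl⟩ := hδ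
    have g := srt_perm δ
    exact h ⟨⟨⟨List.pairwise_insertionSort _ _, fun x hx => a x (g.mem_iff.1 hx)⟩,
      by rwa [g.sum_eq], by rwa [g.sum_eq]⟩, by rwa [epsL_perm g]⟩

def eqvS (s : ℤ) (p n : ℕ) :
    {δ // δ ∈ CS p n s} ≃ Σ μ : List ℕ, Fin (multS s p n μ) :=
  (Equiv.sigmaFiberEquiv (fun δ : {δ // δ ∈ CS p n s} => srt δ.1)).symm.trans
    (Equiv.sigmaCongrRight fun μ => Fintype.equivFinOfCardEq (by
      let _ : Fintype {δ // δ ∈ CS p n s ∧ srt δ = μ} :=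
        Fintype.subtype ((CS p n s).filter (fun δ => srt δ = μ)) (fun x => Finset.mem_filter)
      rw [← card_fiber, Fintype.card_congr
        (Equiv.subtypeSubtypeEquivSubtypeInter (fun δ => δ ∈ CS p n s) (fun δ => srt δ = μ))]
      exact Fintype.card_of_subtype _ (fun x => Finset.mem_filter)))

lemma eqvS_fst (s : ℤ) (p n : ℕ) (δ : {δ // δ ∈ CS p n s}) : (eqvS s p n δ).1 = srt δ.1 := rfl

lemma cls_bigSum (k : Type u) [Field k] (s : ℤ) (p n : ℕ) :
    cls (GA k n) (⨁ t : Σ μ : List ℕ, Fin (multS s p n μ), SYPM k n t.1 (onePart (n - t.1.sum)))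
      = sgnSum k n p s n n [] := by
  letI : Fintype (Σ μ : List ℕ, Fin (multS s p n μ)) := Fintype.ofEquiv _ (eqvS s p n)
  rw [cls_directSum]
  rw [← Equiv.sum_comp (eqvS s p n), sgnSum, ← Finset.sum_filter]
  change _ = ∑ δ ∈ CS p n s, vM k n ([] ++ δ)
  rw [← Finset.sum_coe_sort (CS p n s) (fun δ => vM k n ([] ++ δ))]
  refine Finset.sum_congr rfl fun δ _ => ?_
  have hδ := (mem_Comp p n n le_rfl δ.1).1 (Finset.mem_filter.1 δ.2).1
  have e := (srt_perm δ.1)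
  rw [List.nil_append, vM, eqvS_fst, e.sum_eq]
  exact sypm_perm e _ (by rw [e.sum_eq]; omega)

end

theorem stmt13 (k : Type*) [Field k] (p : ℕ) (hp : p.Prime) (hodd : Odd p) [CharP k p]
    (n : ℕ) (hn : 1 ≤ n) :
    Nonempty (
      (SYPM k n [] [n] ×
        ⨁ t : Σ μ : List ℕ, Fin (multNeg p n μ), SYPM k n t.1 (onePart (n - t.1.sum)))
      ≃ₗ[GA k n]
      ⨁ t : Σ μ : List ℕ, Fin (multPos p n μ), SYPM k n t.1 (onePart (n - t.1.sum))) := by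
  have h2 : (2 : k) ≠ 0 := by
    intro h
    have h' : ((2 : ℕ) : k) = 0 := by exact_mod_cast h
    rw [CharP.cast_eq_zero_iff k p] at h'
    have := (Nat.prime_dvd_prime_iff_eq hp Nat.prime_two).1 h'
    subst this
    exact absurd hodd (by decide)
  have hrel := sgnSum_rel p h2 (n := n) n n [] le_rfl (by simp)
  have h0 : vM k n [] = cls (GA k n) (SYPM k n [] [n]) := by
    have : onePart (n - ([] : List ℕ).sum) = [n] := by simp [onePart]; omega
    rw [vM, this]
  rw [h0, ← cls_bigSum, ← cls_bigSum, ← cls_prod] at hrel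
  exact cls_eq.1 hrel
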